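/- arXiv:1605.06010 — 3 statements merged into one kernel-verified Lean document; each statement's English description precedes it below -/
import Mathlib

section
/- Let (X, T) be a dynamical system. The following statements are equivalent: (1) (X, T) is mildly mixing; (2) (K(X), T_K) is mildly mixing; (3) for every λ ∈ (0,1], (𝔽^{=λ}(X), T_F|_{𝔽^{=λ}(X)}) is mildly mixing; (4) there exists λ ∈ (0,1] such that (𝔽^{=λ}(X), T_F|_{𝔽^{=λ}(X)}) is mildly mixing. -/
open Metric Set TopologicalSpace Filter Function
open scoped Classical

variable {X Y : Type*}

/-- Extended Hausdorff metric on subsets of `X`: the usual Hausdorff distance between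
two nonempty sets (or two empty sets), and `diam X` when exactly one of them is empty. -/
noncomputable def eHd (X : Type*) [MetricSpace X] (A B : Set X) : ℝ :=
  if (A.Nonempty ∧ B.Nonempty) ∨ (A = ∅ ∧ B = ∅) then Metric.hausdorffDist A B
  else Metric.diam (Set.univ : Set X)

/-- The `α`-cut of a fuzzy set. -/
def cut (A : X → ℝ) (α : ℝ) : Set X := {x | α ≤ A x}

/-- The levelwise metric `d_∞` on fuzzy sets. -/
noncomputable def dinf [MetricSpace X] (A B : X → ℝ) : ℝ :=
  sSup {r : ℝ | ∃ α ∈ Set.Ioc (0:ℝ) 1, r = eHd X (cut A α) (cut B α)}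

/-- A fuzzy set: an upper semicontinuous function into `[0,1]`. -/
def IsFuzzy [TopologicalSpace X] (A : X → ℝ) : Prop :=
  (∀ x, A x ∈ Set.Icc (0:ℝ) 1) ∧ UpperSemicontinuous A

/-- `𝔽₀(X)`: nonempty (not identically zero) u.s.c. fuzzy sets. -/
def F0 (X : Type*) [TopologicalSpace X] : Set (X → ℝ) :=
  {A | IsFuzzy A ∧ ∃ x, A x ≠ 0}

/-- `𝔽^{=λ}(X)`: u.s.c. fuzzy sets with maximum value `λ`. -/
def Feq (X : Type*) [TopologicalSpace X] (lam : ℝ) : Set (X → ℝ) :=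
  {A | IsFuzzy A ∧ (∃ x, A x = lam) ∧ ∀ x, A x ≤ lam}

/-- `𝔽^{≥λ}(X)`: u.s.c. fuzzy sets attaining a value `≥ λ`. -/
def Fge (X : Type*) [TopologicalSpace X] (lam : ℝ) : Set (X → ℝ) :=
  {A | IsFuzzy A ∧ ∃ x, lam ≤ A x}

/-- Zadeh's extension of `T`. -/
noncomputable def zadeh (T : X → X) (A : X → ℝ) : X → ℝ :=
  fun x => sSup (A '' (T ⁻¹' {x}))

/-- The induced map `T_K` on the hyperspace of nonempty closed (= compact) subsets. -/
def hyper [TopologicalSpace X] (T : X → X) (hT : Continuous T)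
    (A : NonemptyCompacts X) : NonemptyCompacts X :=
  ⟨⟨T '' A, A.isCompact.image hT⟩, A.nonempty.image T⟩

/-- Topological transitivity. -/
def TopTrans [TopologicalSpace Y] (S : Y → Y) : Prop :=
  ∀ U V : Set Y, IsOpen U → IsOpen V → U.Nonempty → V.Nonempty →
    ∃ n : ℕ, (S^[n] '' U ∩ V).Nonempty

/-- Weak mixing: `S × S` is transitive. -/
def TopWeakMix [TopologicalSpace Y] (S : Y → Y) : Prop :=
  TopTrans (fun p : Y × Y => (S p.1, S p.2))

/-- Topological transitivity of `S` restricted to `C`, for the topology induced by the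
(pseudo)metric `ρ`, phrased via metric balls. -/
def TransOn (ρ : Y → Y → ℝ) (S : Y → Y) (C : Set Y) : Prop :=
  ∀ A ∈ C, ∀ B ∈ C, ∀ ε > 0, ∃ n : ℕ, ∃ E ∈ C, ρ E A < ε ∧ ρ (S^[n] E) B < ε

/-- Weak mixing of `S` restricted to `C`, phrased via metric balls. -/
def WeakMixOn (ρ : Y → Y → ℝ) (S : Y → Y) (C : Set Y) : Prop :=
  ∀ A₁ ∈ C, ∀ A₂ ∈ C, ∀ B₁ ∈ C, ∀ B₂ ∈ C, ∀ ε > 0, ∃ n : ℕ,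
    ∃ E₁ ∈ C, ∃ E₂ ∈ C, ρ E₁ A₁ < ε ∧ ρ E₂ A₂ < ε ∧
      ρ (S^[n] E₁) B₁ < ε ∧ ρ (S^[n] E₂) B₂ < ε


/-- Mild mixing on a topological space: `S` is weakly disjoint with every transitive
dynamical system (a compact metric space with at least two points together with a
continuous surjection). -/
def MildMixTop [TopologicalSpace Y] (S : Y → Y) : Prop :=
  ∀ (Z : Type) [MetricSpace Z] [CompactSpace Z] [Nontrivial Z] (R : Z → Z),
    Continuous R → Function.Surjective R → TopTrans R →
      TopTrans (fun p : Y × Z => (S p.1, R p.2))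

/-- Mild mixing of `S` restricted to `C` (with the metric `ρ`): the product of the
subsystem with every transitive dynamical system is transitive, phrased via balls. -/
def MildMixOn (ρ : Y → Y → ℝ) (S : Y → Y) (C : Set Y) : Prop :=
  ∀ (Z : Type) [MetricSpace Z] [CompactSpace Z] [Nontrivial Z] (R : Z → Z),
    Continuous R → Function.Surjective R → TopTrans R →
      ∀ A ∈ C, ∀ B ∈ C, ∀ z₁ z₂ : Z, ∀ ε > 0, ∃ n : ℕ, ∃ E ∈ C, ∃ w : Z,
        ρ E A < ε ∧ dist w z₁ < ε ∧ ρ (S^[n] E) B < ε ∧ dist (R^[n] w) z₂ < ε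

theorem exists_model (X : Type*) [MetricSpace X] [CompactSpace X] :
    ∃ (X' : Type) (_ : MetricSpace X') (_ : CompactSpace X'), Nonempty (X' ≃ₜ X) := by
  have hinj : Function.Injective (kuratowskiEmbedding X) :=
    (kuratowskiEmbedding.isometry X).injective
  haveI : Small.{0} X := small_of_injective hinj
  let e : Shrink.{0} X ≃ X := (equivShrink X).symm
  letI m : MetricSpace (Shrink.{0} X) := MetricSpace.induced e e.injective inferInstance
  have hi : Isometry e := Isometry.of_dist_eq (fun _ _ => rfl)
  let h : Shrink.{0} X ≃ᵢ X := ⟨e, hi⟩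
  exact ⟨Shrink.{0} X, m, h.toHomeomorph.symm.compactSpace, ⟨h.toHomeomorph⟩⟩

theorem iter_prod {X Z : Type*} (T : X → X) (R : Z → Z) (n : ℕ) (p : X × Z) :
    (fun p : X × Z => (T p.1, R p.2))^[n] p = (T^[n] p.1, R^[n] p.2) := by
  induction n generalizing p with
  | zero => rfl
  | succ n ih => rw [iterate_succ_apply, ih]; rfl

theorem mm_fin {X : Type*} [MetricSpace X] [CompactSpace X]
    {T : X → X} (hT : Continuous T) (hTs : Function.Surjective T) (h : MildMixTop T) (k : ℕ) :
    ∀ (Z : Type) [MetricSpace Z] [CompactSpace Z] [Nontrivial Z] (R : Z → Z),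
      Continuous R → Function.Surjective R → TopTrans R →
      ∀ (U V : Fin k → Set X), (∀ i, IsOpen (U i)) → (∀ i, IsOpen (V i)) →
      (∀ i, (U i).Nonempty) → (∀ i, (V i).Nonempty) →
      ∀ W₁ W₂ : Set Z, IsOpen W₁ → IsOpen W₂ → W₁.Nonempty → W₂.Nonempty →
      ∃ (n : ℕ) (x : Fin k → X) (w : Z), (∀ i, x i ∈ U i) ∧ (∀ i, T^[n] (x i) ∈ V i) ∧
        w ∈ W₁ ∧ R^[n] w ∈ W₂ := by
  induction k with
  | zero =>
    intro Z _ _ _ R hR hRs hRt U V _ _ _ _ W₁ W₂ o₁ o₂ n₁ n₂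
    obtain ⟨n, _, ⟨w, hw, rfl⟩, hw2⟩ := hRt W₁ W₂ o₁ o₂ n₁ n₂
    exact ⟨n, Fin.elim0, w, fun i => i.elim0, fun i => i.elim0, hw, hw2⟩
  | succ k ih =>
    intro Z _ _ _ R hR hRs hRt U V oU oV nU nV W₁ W₂ o₁ o₂ n₁ n₂
    obtain ⟨X', _, _, ⟨e⟩⟩ := exists_model X
    let T' : X' → X' := fun y => e.symm (T (e y))
    have hit : ∀ n y, e (T'^[n] y) = T^[n] (e y) := by
      intro n y
      have : Semiconj e T' T := fun y => by simp [T']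
      exact (this.iterate_right n).eq y
    have key := h Z R hR hRs hRt
    haveI : Nonempty X' := ⟨e.symm (nU 0).some⟩
    have key' : TopTrans (fun p : X' × Z => (T' p.1, R p.2)) := by
      intro A B oA oB nA nB
      let q : X × Z → X' × Z := fun p => (e.symm p.1, p.2)
      have hq : Continuous q := by fun_prop
      have hqs : Function.Surjective q := fun p => ⟨(e p.1, p.2), by simp [q]⟩
      obtain ⟨n, _, ⟨p, hp, rfl⟩, hp2⟩ := key (q ⁻¹' A) (q ⁻¹' B) (oA.preimage hq)
        (oB.preimage hq) (nA.preimage hqs) (nB.preimage hqs)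
      refine ⟨n, _, ⟨q p, hp, rfl⟩, ?_⟩
      rw [iter_prod] at hp2 ⊢
      have : T'^[n] (q p).1 = e.symm (T^[n] p.1) := by
        apply e.injective; rw [hit]; simp [q]
      rw [this]; exact hp2
    have hT' : Continuous T' := by fun_prop
    have hT's : Function.Surjective T' := e.symm.surjective.comp (hTs.comp e.surjective)
    obtain ⟨n, x, w, hx, hx2, hw, hw2⟩ := ih (X' × Z) (fun p => (T' p.1, R p.2)) (by fun_prop)
      (hT's.prodMap hRs) key' (fun i => U i.succ) (fun i => V i.succ) (fun i => oU _)
      (fun i => oV _) (fun i => nU _) (fun i => nV _)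
      ((e ⁻¹' (U 0)) ×ˢ W₁) ((e ⁻¹' (V 0)) ×ˢ W₂)
      (((oU 0).preimage e.continuous).prod o₁) (((oV 0).preimage e.continuous).prod o₂)
      (((nU 0).preimage e.surjective).prod n₁) (((nV 0).preimage e.surjective).prod n₂)
    rw [iter_prod] at hw2
    refine ⟨n, Fin.cons (e w.1) x, w.2, ?_, ?_, hw.2, hw2.2⟩
    · intro i
      refine Fin.cases ?_ ?_ i
      · exact hw.1
      · exact hx
    · intro i
      refine Fin.cases ?_ ?_ i
      · simpa [hit] using hw2.1
      · exact hx2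

/-- balls version over a finite index type -/
theorem mm_finite {X : Type*} [MetricSpace X] [CompactSpace X]
    {T : X → X} (hT : Continuous T) (hTs : Function.Surjective T) (h : MildMixTop T)
    {ι : Type*} [Finite ι] {Z : Type} [MetricSpace Z] [CompactSpace Z] [Nontrivial Z] {R : Z → Z}
    (hR : Continuous R) (hRs : Function.Surjective R) (hRt : TopTrans R)
    (a b : ι → X) {δ : ℝ} (hδ : 0 < δ) {W₁ W₂ : Set Z} (o₁ : IsOpen W₁) (o₂ : IsOpen W₂)
    (n₁ : W₁.Nonempty) (n₂ : W₂.Nonempty) :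
    ∃ (n : ℕ) (x : ι → X) (w : Z), (∀ i, dist (x i) (a i) < δ) ∧
      (∀ i, dist (T^[n] (x i)) (b i) < δ) ∧ w ∈ W₁ ∧ R^[n] w ∈ W₂ := by
  obtain ⟨k, ⟨e⟩⟩ := Finite.exists_equiv_fin ι
  obtain ⟨n, x, w, h1, h2, h3, h4⟩ := mm_fin hT hTs h k Z R hR hRs hRt
    (fun i => ball (a (e.symm i)) δ) (fun i => ball (b (e.symm i)) δ)
    (fun _ => isOpen_ball) (fun _ => isOpen_ball) (fun _ => nonempty_ball.2 hδ)
    (fun _ => nonempty_ball.2 hδ) W₁ W₂ o₁ o₂ n₁ n₂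
  exact ⟨n, fun i => x (e i), w, fun i => by simpa using h1 (e i), fun i => by simpa using h2 (e i),
    h3, h4⟩

theorem exists_net (X : Type*) [MetricSpace X] [CompactSpace X] {δ : ℝ} (hδ : 0 < δ) :
    ∃ t : Set X, Finite t ∧ ∀ x : X, ∃ p : t, dist x p < δ := by
  obtain ⟨t, -, ht, h⟩ := finite_cover_balls_of_compact (isCompact_univ (X := X)) hδ
  refine ⟨t, ht, fun x => ?_⟩
  have := h (mem_univ x)
  simp only [mem_iUnion, mem_ball] at this
  obtain ⟨p, hp, hx⟩ := this
  exact ⟨⟨p, hp⟩, hx⟩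

/-- finitely supported fuzzy set -/
noncomputable def pts {X ι : Type*} (x : ι → X) (v : ι → ℝ) : X → ℝ :=
  fun y => sSup (insert 0 (v '' (x ⁻¹' {y})))

section pts
variable {X ι : Type*} [Finite ι] {x : ι → X} {v : ι → ℝ}

theorem pts_mem (y : X) : pts x v y ∈ insert (0:ℝ) (v '' (x ⁻¹' {y})) :=
  (insert_nonempty _ _).csSup_mem (((Set.toFinite _).image v).insert 0)

theorem pts_nonneg (y : X) : 0 ≤ pts x v y :=
  le_csSup (((Set.toFinite _).image v).insert 0).bddAbove (mem_insert _ _)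

theorem le_pts (i : ι) : v i ≤ pts x v (x i) :=
  le_csSup (((Set.toFinite _).image v).insert 0).bddAbove
    (mem_insert_of_mem _ ⟨i, rfl, rfl⟩)

theorem le_pts_iff {α : ℝ} (hα : 0 < α) {y : X} :
    α ≤ pts x v y ↔ ∃ i, x i = y ∧ α ≤ v i := by
  constructor
  · intro h
    rcases pts_mem (x := x) (v := v) y with h0 | ⟨i, hi, hv⟩
    · linarith
    · exact ⟨i, hi, hv ▸ h⟩
  · rintro ⟨i, rfl, h⟩
    exact h.trans (le_pts i)

theorem pts_le {c : ℝ} (hc : 0 ≤ c) (hv : ∀ i, v i ≤ c) (y : X) : pts x v y ≤ c := by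
  rcases pts_mem (x := x) (v := v) y with h0 | ⟨i, hi, h⟩
  · linarith
  · rw [← h]; exact hv i

theorem pts_Feq [MetricSpace X] {c : ℝ} (hc : c ∈ Ioc (0:ℝ) 1) (hv : ∀ i, v i ≤ c)
    (hv' : ∃ i, v i = c) : pts x v ∈ Feq X c := by
  refine ⟨⟨fun y => ⟨pts_nonneg y, (pts_le hc.1.le hv y).trans hc.2⟩, ?_⟩, ?_, pts_le hc.1.le hv⟩
  · rw [upperSemicontinuous_iff_isClosed_preimage]
    intro α
    rcases le_or_gt α 0 with h | h
    · convert isClosed_univ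
      exact eq_univ_of_forall fun y => h.trans (pts_nonneg y)
    · refine Set.Finite.isClosed ((finite_range x).subset ?_)
      intro y hy
      obtain ⟨i, hi, -⟩ := (le_pts_iff h).1 hy
      exact ⟨i, hi⟩
  · obtain ⟨i, hi⟩ := hv'
    exact ⟨x i, le_antisymm (pts_le hc.1.le hv _) (hi ▸ le_pts i)⟩

theorem zadeh_pts {T : X → X} (hTs : Function.Surjective T) :
    zadeh T (pts x v) = pts (fun i => T (x i)) v := by
  funext y
  have hfin : (pts x v '' (T ⁻¹' {y})).Finite := by
    refine ((finite_range v).insert 0).subset ?_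
    rintro _ ⟨z, -, rfl⟩
    rcases pts_mem (x := x) (v := v) z with h0 | ⟨i, hi, h⟩
    · exact Or.inl h0
    · exact Or.inr ⟨i, h⟩
  have hne : (pts x v '' (T ⁻¹' {y})).Nonempty := by
    obtain ⟨z, hz⟩ := hTs y
    exact ⟨_, z, hz, rfl⟩
  apply le_antisymm
  · apply csSup_le hne
    rintro _ ⟨z, hz, rfl⟩
    rcases (pts_nonneg (x := x) (v := v) z).eq_or_lt with h | h
    · rw [← h]; exact pts_nonneg y
    · obtain ⟨i, hi, hv⟩ := (le_pts_iff h).1 le_rfl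
      refine (le_pts_iff h).2 ⟨i, ?_, hv⟩
      rw [hi]; exact hz
  · have h0 : 0 ≤ zadeh T (pts x v) y := by
      obtain ⟨_, z, hz, rfl⟩ := hne
      exact (pts_nonneg z).trans (le_csSup hfin.bddAbove ⟨z, hz, rfl⟩)
    rcases (pts_nonneg (x := fun i => T (x i)) (v := v) y).eq_or_lt with h | h
    · rw [← h]; exact h0
    · obtain ⟨i, hi, hv⟩ := (le_pts_iff h).1 le_rfl
      exact hv.trans ((le_pts i).trans (le_csSup hfin.bddAbove ⟨x i, hi, rfl⟩))

theorem zadeh_iter_pts {T : X → X} (hTs : Function.Surjective T) (n : ℕ) :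
    (zadeh T)^[n] (pts x v) = pts (fun i => T^[n] (x i)) v := by
  induction n with
  | zero => rfl
  | succ n ih => rw [iterate_succ_apply', ih, zadeh_pts hTs]; simp only [iterate_succ_apply']

theorem dinf_pts_le [MetricSpace X] {A : X → ℝ} {r : ℝ} (hr : 0 ≤ r)
    (h1 : ∀ i, ∃ y, v i ≤ A y ∧ dist (x i) y ≤ r)
    (h2 : ∀ y, ∃ i, A y ≤ v i ∧ dist y (x i) ≤ r) : dinf (pts x v) A ≤ r := by
  apply csSup_le
  · exact ⟨_, 1, by norm_num, rfl⟩
  · rintro _ ⟨α, hα, rfl⟩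
    have k1 : ∀ z ∈ cut (pts x v) α, ∃ y ∈ cut A α, dist z y ≤ r := by
      intro z hz
      obtain ⟨i, rfl, hi⟩ := (le_pts_iff hα.1).1 hz
      obtain ⟨y, hy, hd⟩ := h1 i
      exact ⟨y, hi.trans hy, hd⟩
    have k2 : ∀ y ∈ cut A α, ∃ z ∈ cut (pts x v) α, dist y z ≤ r := by
      intro y hy
      obtain ⟨i, hi, hd⟩ := h2 y
      exact ⟨x i, le_trans (le_trans hy hi) (le_pts i), hd⟩
    have : ((cut (pts x v) α).Nonempty ∧ (cut A α).Nonempty) ∨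
        (cut (pts x v) α = ∅ ∧ cut A α = ∅) := by
      rcases (cut (pts x v) α).eq_empty_or_nonempty with h | h
      · right
        refine ⟨h, ?_⟩
        by_contra hA
        obtain ⟨y, hy⟩ := nonempty_iff_ne_empty.2 hA
        obtain ⟨z, hz, -⟩ := k2 y hy
        rw [h] at hz; exact hz
      · left
        obtain ⟨z, hz⟩ := h
        obtain ⟨y, hy, -⟩ := k1 z hz
        exact ⟨⟨z, hz⟩, ⟨y, hy⟩⟩
    unfold eHd
    rw [if_pos this]
    exact hausdorffDist_le_of_mem_dist hr k1 k2

end pts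

theorem hd_le_diam {X : Type*} [MetricSpace X] [CompactSpace X] (A B : Set X) :
    eHd X A B ≤ diam (univ : Set X) := by
  have hb : Bornology.IsBounded (univ : Set X) := isCompact_univ.isBounded
  unfold eHd
  split_ifs with h
  · rcases h with ⟨⟨a, ha⟩, ⟨b, hb'⟩⟩ | ⟨rfl, rfl⟩
    · refine hausdorffDist_le_of_mem_dist diam_nonneg ?_ ?_
      · exact fun x _ => ⟨b, hb', dist_le_diam_of_mem hb (mem_univ _) (mem_univ _)⟩
      · exact fun x _ => ⟨a, ha, dist_le_diam_of_mem hb (mem_univ _) (mem_univ _)⟩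
    · rw [hausdorffDist_self_zero]; exact diam_nonneg
  · exact le_rfl

theorem dist_lt_of_dinf {X : Type*} [MetricSpace X] [CompactSpace X] {E : X → ℝ} {u x : X}
    {c ε : ℝ} (hc : c ∈ Ioc (0:ℝ) 1) (h : dinf E (pts (fun _ : Unit => u) (fun _ => c)) < ε)
    (hx : c ≤ E x) : dist x u < ε := by
  have hu : cut (pts (fun _ : Unit => u) (fun _ => c)) c = {u} := by
    ext y
    refine (le_pts_iff hc.1).trans ?_
    simp [eq_comm]
  have h1 : eHd X (cut E c) (cut (pts (fun _ : Unit => u) (fun _ => c)) c) < ε := by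
    refine lt_of_le_of_lt ?_ h
    unfold dinf
    refine le_csSup ⟨diam (univ : Set X), ?_⟩ ⟨c, hc, rfl⟩
    rintro _ ⟨α, -, rfl⟩
    exact hd_le_diam _ _
  have hne : (cut E c).Nonempty := ⟨x, hx⟩
  rw [hu] at h1
  unfold eHd at h1
  rw [if_pos (Or.inl ⟨hne, singleton_nonempty u⟩)] at h1
  obtain ⟨y, hy, hd⟩ := exists_dist_lt_of_hausdorffDist_lt (x := x) hx h1
    (hausdorffEDist_ne_top_of_nonempty_of_bounded hne (singleton_nonempty u)
      (isCompact_univ.isBounded.subset (subset_univ _)) Bornology.isBounded_singleton)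
  rw [mem_singleton_iff] at hy
  rwa [hy] at hd

theorem zadeh_iter_bd {X : Type*} {T : X → X} {E : X → ℝ} (hTs : Function.Surjective T)
    (hE : ∀ x, E x ≤ 1) (n : ℕ) :
    (∀ y, (zadeh T)^[n] E y ≤ 1) ∧ ∀ x, E x ≤ (zadeh T)^[n] E (T^[n] x) := by
  induction n with
  | zero => exact ⟨hE, fun x => le_rfl⟩
  | succ n ih =>
    simp only [iterate_succ_apply']
    refine ⟨fun y => ?_, fun x => (ih.2 x).trans ?_⟩
    · obtain ⟨z, hz⟩ := hTs y
      unfold zadeh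
      refine csSup_le ⟨_, z, hz, rfl⟩ ?_
      rintro _ ⟨z, -, rfl⟩
      exact ih.1 z
    · refine le_csSup ⟨1, ?_⟩ ⟨_, rfl, rfl⟩
      rintro _ ⟨z, -, rfl⟩
      exact ih.1 z

theorem hyper_iter {X : Type*} [MetricSpace X] (T : X → X) (hT : Continuous T) (n : ℕ)
    (A : NonemptyCompacts X) : (((hyper T hT)^[n] A : NonemptyCompacts X) : Set X) = T^[n] '' A := by
  induction n with
  | zero => simp
  | succ n ih =>
    rw [iterate_succ_apply', iterate_succ', image_comp, ← ih]
    rfl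

theorem one_two {X : Type*} [MetricSpace X] [CompactSpace X]
    (T : X → X) (hT : Continuous T) (hTs : Function.Surjective T) (h : MildMixTop T) :
    MildMixTop (hyper T hT) := by
  intro Z _ _ _ R hR hRs hRt U V oU oV nU nV
  obtain ⟨⟨A, z₁⟩, hA⟩ := nU
  obtain ⟨⟨B, z₂⟩, hB⟩ := nV
  obtain ⟨U₁, U₂, oU₁, oU₂, hU₁, hU₂, hU⟩ := isOpen_prod_iff.1 oU A z₁ hA
  obtain ⟨V₁, V₂, oV₁, oV₂, hV₁, hV₂, hV⟩ := isOpen_prod_iff.1 oV B z₂ hB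
  obtain ⟨ε₁, hε₁, hb₁⟩ := Metric.isOpen_iff.1 oU₁ A hU₁
  obtain ⟨ε₂, hε₂, hb₂⟩ := Metric.isOpen_iff.1 oV₁ B hV₁
  obtain ⟨δ, hδ, hδ₁, hδ₂⟩ : ∃ δ : ℝ, 0 < δ ∧ 2 * δ < ε₁ ∧ 2 * δ < ε₂ :=
    ⟨min ε₁ ε₂ / 3, by positivity, by linarith [min_le_left ε₁ ε₂, lt_min hε₁ hε₂],
      by linarith [min_le_right ε₁ ε₂, lt_min hε₁ hε₂]⟩
  obtain ⟨t, _, ht⟩ := exists_net X hδ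
  let ι := {q : t × t // (∃ a ∈ A, dist a (q.1 : X) < δ) ∧ (∃ b ∈ B, dist b (q.2 : X) < δ)}
  have hιA : ∀ a ∈ A, ∃ i : ι, dist a (i.1.1 : X) < δ := by
    intro a ha
    obtain ⟨p, hp⟩ := ht a
    obtain ⟨b, hb⟩ := B.nonempty
    obtain ⟨q, hq⟩ := ht b
    exact ⟨⟨(p, q), ⟨a, ha, hp⟩, ⟨b, hb, hq⟩⟩, hp⟩
  have hιB : ∀ b ∈ B, ∃ i : ι, dist b (i.1.2 : X) < δ := by
    intro b hb
    obtain ⟨q, hq⟩ := ht b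
    obtain ⟨a, ha⟩ := A.nonempty
    obtain ⟨p, hp⟩ := ht a
    exact ⟨⟨(p, q), ⟨a, ha, hp⟩, ⟨b, hb, hq⟩⟩, hq⟩
  obtain ⟨n, x, w, hx, hx', hw, hw'⟩ := mm_finite (ι := ι) hT hTs h hR hRs hRt
    (fun i => (i.1.1 : X)) (fun i => (i.1.2 : X)) hδ oU₂ oV₂ ⟨z₁, hU₂⟩ ⟨z₂, hV₂⟩
  haveI : Nonempty ι := by
    obtain ⟨a, ha⟩ := A.nonempty
    exact ⟨(hιA a ha).choose⟩
  let E : NonemptyCompacts X := ⟨⟨range x, (finite_range x).isCompact⟩, range_nonempty x⟩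
  refine ⟨n, _, ⟨(E, w), ?_, rfl⟩, ?_⟩
  · apply hU
    refine ⟨hb₁ ?_, hw⟩
    rw [mem_ball, NonemptyCompacts.dist_eq]
    refine lt_of_le_of_lt (hausdorffDist_le_of_mem_dist (by positivity : 0 ≤ 2 * δ) ?_ ?_) hδ₁
    · rintro _ ⟨i, rfl⟩
      obtain ⟨a, ha, hd⟩ := i.2.1
      refine ⟨a, ha, ?_⟩
      linarith [hx i, dist_triangle_right (x i) a (i.1.1 : X)]
    · intro a ha
      obtain ⟨i, hi⟩ := hιA a ha
      refine ⟨x i, ⟨i, rfl⟩, ?_⟩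
      linarith [hx i, dist_triangle_right a (x i) (i.1.1 : X)]
  · rw [iter_prod]
    apply hV
    refine ⟨hb₂ ?_, hw'⟩
    rw [mem_ball, NonemptyCompacts.dist_eq, hyper_iter]
    refine lt_of_le_of_lt (hausdorffDist_le_of_mem_dist (by positivity : 0 ≤ 2 * δ) ?_ ?_) hδ₂
    · rintro _ ⟨_, ⟨i, rfl⟩, rfl⟩
      obtain ⟨b, hb, hd⟩ := i.2.2
      refine ⟨b, hb, ?_⟩
      linarith [hx' i, dist_triangle_right (T^[n] (x i)) b (i.1.2 : X)]
    · intro b hb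
      obtain ⟨i, hi⟩ := hιB b hb
      refine ⟨_, ⟨x i, ⟨i, rfl⟩, rfl⟩, ?_⟩
      linarith [hx' i, dist_triangle_right b (T^[n] (x i)) (i.1.2 : X)]

theorem dist_lt_of_hyper {X : Type*} [MetricSpace X] {A : NonemptyCompacts X} {u x : X} {ε : ℝ}
    (h : A ∈ ball ({u} : NonemptyCompacts X) ε) (hx : x ∈ (A : Set X)) : x ∈ ball u ε := by
  rw [mem_ball, NonemptyCompacts.dist_eq] at h
  obtain ⟨y, hy, hd⟩ := exists_dist_lt_of_hausdorffDist_lt hx h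
    (hausdorffEDist_ne_top_of_nonempty_of_bounded A.nonempty
      (({u} : NonemptyCompacts X)).nonempty A.isCompact.isBounded
      (({u} : NonemptyCompacts X)).isCompact.isBounded)
  have : y = u := by simpa using hy
  rwa [this] at hd

theorem two_one {X : Type*} [MetricSpace X] [CompactSpace X]
    (T : X → X) (hT : Continuous T) (h : MildMixTop (hyper T hT)) : MildMixTop T := by
  intro Z _ _ _ R hR hRs hRt U V oU oV nU nV
  obtain ⟨⟨u, z₁⟩, hu⟩ := nU
  obtain ⟨⟨v, z₂⟩, hv⟩ := nV
  obtain ⟨U₁, U₂, oU₁, oU₂, hU₁, hU₂, hU⟩ := isOpen_prod_iff.1 oU u z₁ hu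
  obtain ⟨V₁, V₂, oV₁, oV₂, hV₁, hV₂, hV⟩ := isOpen_prod_iff.1 oV v z₂ hv
  obtain ⟨ε₁, hε₁, hb₁⟩ := Metric.isOpen_iff.1 oU₁ u hU₁
  obtain ⟨ε₂, hε₂, hb₂⟩ := Metric.isOpen_iff.1 oV₁ v hV₁
  obtain ⟨n, _, ⟨⟨A, w⟩, ⟨hA, hw⟩, rfl⟩, hq⟩ := h Z R hR hRs hRt
    (ball ({u} : NonemptyCompacts X) ε₁ ×ˢ U₂) (ball ({v} : NonemptyCompacts X) ε₂ ×ˢ V₂)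
    (isOpen_ball.prod oU₂) (isOpen_ball.prod oV₂)
    ⟨({u}, z₁), mem_ball_self hε₁, hU₂⟩ ⟨({v}, z₂), mem_ball_self hε₂, hV₂⟩
  rw [iter_prod] at hq
  obtain ⟨x, hx⟩ := A.nonempty
  refine ⟨n, _, ⟨(x, w), hU ⟨hb₁ (dist_lt_of_hyper hA hx), hw⟩, rfl⟩, ?_⟩
  rw [iter_prod]
  refine hV ⟨hb₂ (dist_lt_of_hyper hq.1 ?_), hq.2⟩
  rw [hyper_iter]
  exact ⟨x, hx, rfl⟩

theorem one_three {X : Type*} [MetricSpace X] [CompactSpace X]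
    (T : X → X) (hT : Continuous T) (hTs : Function.Surjective T) (h : MildMixTop T)
    (c : ℝ) (hc : c ∈ Ioc (0:ℝ) 1) : MildMixOn dinf (zadeh T) (Feq X c) := by
  intro Z _ _ _ R hR hRs hRt A hA B hB z₁ z₂ ε hε
  obtain ⟨δ, hδ, hδ1⟩ : ∃ δ : ℝ, 0 < δ ∧ 2 * δ < ε := ⟨ε / 3, by positivity, by linarith⟩
  obtain ⟨t, _, ht⟩ := exists_net X hδ
  have hmax : ∀ F ∈ Feq X c, ∀ p : t, ∃ m, dist m (p : X) ≤ δ ∧ ∀ y, dist y (p : X) ≤ δ → F y ≤ F m := by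
    intro F hF p
    obtain ⟨m, hm, hm'⟩ := UpperSemicontinuousOn.exists_isMaxOn
      (nonempty_closedBall.2 hδ.le : (closedBall (p : X) δ).Nonempty)
      isClosed_closedBall.isCompact (hF.1.2.upperSemicontinuousOn _)
    exact ⟨m, hm, fun y hy => hm' hy⟩
  choose mA hmA hmA' using hmax A hA
  choose mB hmB hmB' using hmax B hB
  have hcA : ∃ i, A (mA i) = c := by
    obtain ⟨y, hy⟩ := hA.2.1
    obtain ⟨p, hp⟩ := ht y
    exact ⟨p, le_antisymm (hA.2.2 _) (hy ▸ hmA' p y hp.le)⟩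
  have hcB : ∃ i, B (mB i) = c := by
    obtain ⟨y, hy⟩ := hB.2.1
    obtain ⟨p, hp⟩ := ht y
    exact ⟨p, le_antisymm (hB.2.2 _) (hy ▸ hmB' p y hp.le)⟩
  obtain ⟨iA, hiA⟩ := hcA
  obtain ⟨iB, hiB⟩ := hcB
  obtain ⟨n, x, w, hx, hx', hw, hw'⟩ := mm_finite (ι := t × t) hT hTs h hR hRs hRt
    (fun i => (i.1 : X)) (fun i => (i.2 : X)) hδ (isOpen_ball (x := z₁) (ε := ε))
    (isOpen_ball (x := z₂) (ε := ε)) (nonempty_ball.2 hε) (nonempty_ball.2 hε)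
  let v : t × t → ℝ := fun i => min (A (mA i.1)) (B (mB i.2))
  refine ⟨n, pts x v, pts_Feq hc (fun i => (min_le_left _ _).trans (hA.2.2 _))
    ⟨(iA, iB), by simp [v, hiA, hiB]⟩, w, ?_, hw, ?_, hw'⟩
  · refine lt_of_le_of_lt (dinf_pts_le (by positivity : 0 ≤ 2 * δ) ?_ ?_) hδ1
    · intro i
      refine ⟨mA i.1, min_le_left _ _, ?_⟩
      linarith [hx i, hmA i.1, dist_triangle_right (x i) (mA i.1) (i.1 : X)]
    · intro y
      obtain ⟨p, hp⟩ := ht y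
      refine ⟨(p, iB), le_min (hmA' p y hp.le) (hiB ▸ hA.2.2 y), ?_⟩
      linarith [hx (p, iB), dist_triangle_right y (x (p, iB)) (p : X)]
  · rw [zadeh_iter_pts hTs]
    refine lt_of_le_of_lt (dinf_pts_le (by positivity : 0 ≤ 2 * δ) ?_ ?_) hδ1
    · intro i
      refine ⟨mB i.2, min_le_right _ _, ?_⟩
      linarith [hx' i, hmB i.2, dist_triangle_right (T^[n] (x i)) (mB i.2) (i.2 : X)]
    · intro y
      obtain ⟨p, hp⟩ := ht y
      refine ⟨(iA, p), le_min (hiA ▸ hB.2.2 y) (hmB' p y hp.le), ?_⟩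
      linarith [hx' (iA, p), dist_triangle_right y (T^[n] (x (iA, p))) (p : X)]

theorem four_one {X : Type*} [MetricSpace X] [CompactSpace X]
    (T : X → X) (hTs : Function.Surjective T)
    (c : ℝ) (hc : c ∈ Ioc (0:ℝ) 1) (h : MildMixOn dinf (zadeh T) (Feq X c)) : MildMixTop T := by
  intro Z _ _ _ R hR hRs hRt U V oU oV nU nV
  obtain ⟨⟨u, z₁⟩, hu⟩ := nU
  obtain ⟨⟨v, z₂⟩, hv⟩ := nV
  obtain ⟨ε₁, hε₁, hb₁⟩ := Metric.isOpen_iff.1 oU _ hu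
  obtain ⟨ε₂, hε₂, hb₂⟩ := Metric.isOpen_iff.1 oV _ hv
  obtain ⟨n, E, hE, w, h1, h2, h3, h4⟩ := h Z R hR hRs hRt
    (pts (fun _ : Unit => u) (fun _ => c)) (pts_Feq hc (fun _ => le_rfl) ⟨(), rfl⟩)
    (pts (fun _ : Unit => v) (fun _ => c)) (pts_Feq hc (fun _ => le_rfl) ⟨(), rfl⟩)
    z₁ z₂ (min ε₁ ε₂) (lt_min hε₁ hε₂)
  obtain ⟨x, hx⟩ := hE.2.1
  have k1 := dist_lt_of_dinf hc h1 hx.ge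
  have k2 := dist_lt_of_dinf hc h3
    (hx.ge.trans ((zadeh_iter_bd hTs (fun y => (hE.1.1 y).2) n).2 x))
  refine ⟨n, _, ⟨(x, w), hb₁ ?_, rfl⟩, hb₂ ?_⟩
  · rw [mem_ball, Prod.dist_eq]
    exact max_lt (lt_of_lt_of_le k1 (min_le_left _ _)) (lt_of_lt_of_le h2 (min_le_left _ _))
  · rw [iter_prod, mem_ball, Prod.dist_eq]
    exact max_lt (lt_of_lt_of_le k2 (min_le_right _ _)) (lt_of_lt_of_le h4 (min_le_right _ _))

/-- Mild mixing of `(X,T)`, of `(K(X), T_K)`, and of the Zadeh extension on every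
(equivalently, some) `𝔽^{=λ}(X)` are all equivalent. -/
theorem mildMixing_tfae {X : Type*} [MetricSpace X] [CompactSpace X] [Nontrivial X]
    (T : X → X) (hT : Continuous T) (hTs : Function.Surjective T) :
    List.TFAE
      [MildMixTop T,
       MildMixTop (hyper T hT),
       ∀ lam ∈ Set.Ioc (0:ℝ) 1, MildMixOn dinf (zadeh T) (Feq X lam),
       ∃ lam ∈ Set.Ioc (0:ℝ) 1, MildMixOn dinf (zadeh T) (Feq X lam)] := by
  tfae_have 1 → 2 := one_two T hT hTs
  tfae_have 2 → 1 := two_one T hT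
  tfae_have 1 → 3 := fun h lam hlam => one_three T hT hTs h lam hlam
  tfae_have 3 → 4 := fun h => ⟨1, by norm_num, h 1 (by norm_num)⟩
  tfae_have 4 → 1 := fun ⟨lam, hlam, h⟩ => four_one T hTs lam hlam h
  tfae_finish
end

section
/- Let (X, T) be a dynamical system and 𝐚 = (a₁, …, a_n) ∈ ℕⁿ. The following statements are equivalent: (1) (X, T) is weakly mixing and 𝐚-transitive; (2) (K(X), T_K) is 𝐚-transitive; (3) for every λ ∈ (0,1], (𝔽^{=λ}(X), T_F|_{𝔽^{=λ}(X)}) is 𝐚-transitive; (4) there exists λ ∈ (0,1] such that (𝔽^{=λ}(X), T_F|_{𝔽^{=λ}(X)}) is 𝐚-transitive. -/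
open Metric Set TopologicalSpace Filter Function
open scoped Classical

variable {X Y : Type*}

/-- `𝐚`-transitivity (multi-transitivity with respect to the vector `a`) on a
topological space: the product system `S^{a₁} × ⋯ × S^{a_n}` is transitive. -/
def MultiTransTop [TopologicalSpace Y] {n : ℕ} (a : Fin n → ℕ) (S : Y → Y) : Prop :=
  TopTrans (fun f : Fin n → Y => fun i => S^[a i] (f i))

/-- `𝐚`-transitivity of `S` restricted to `C`, phrased via metric balls. -/
def MultiTransOn {n : ℕ} (a : Fin n → ℕ) (ρ : Y → Y → ℝ) (S : Y → Y) (C : Set Y) : Prop :=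
  ∀ A : Fin n → Y, (∀ i, A i ∈ C) → ∀ B : Fin n → Y, (∀ i, B i ∈ C) → ∀ ε > 0,
    ∃ m : ℕ, ∃ E : Fin n → Y, ∀ i, E i ∈ C ∧ ρ (E i) (A i) < ε ∧
      ρ ((S^[a i])^[m] (E i)) (B i) < ε

section helpers

def PropP {X : Type*} [MetricSpace X] (T : X → X) {n : ℕ} (a : Fin n → ℕ) : Prop :=
  ∀ s t : Fin n → Finset X, ∀ ε : ℝ, 0 < ε → ∃ m : ℕ, ∃ z : Fin n → X → X → X, ∀ i,
    ∀ x ∈ s i, ∀ y ∈ t i, dist (z i x y) x < ε ∧ dist (T^[a i * m] (z i x y)) y < ε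

def PropQ {X : Type*} [MetricSpace X] (T : X → X) {n : ℕ} (a : Fin n → ℕ) : Prop :=
  ∀ u v w : Fin n → X, ∀ ε : ℝ, 0 < ε → ∃ m : ℕ, ∀ i, ∃ p q : X,
    dist p (u i) < ε ∧ dist q (u i) < ε ∧ dist (T^[a i * m] p) (v i) < ε ∧
      dist (T^[a i * m] q) (w i) < ε

lemma iter_pi {Y : Type*} {n : ℕ} (a : Fin n → ℕ) (S : Y → Y) (m : ℕ) (f : Fin n → Y) (i : Fin n) :
    ((fun f : Fin n → Y => fun i => S^[a i] (f i))^[m] f) i = S^[a i * m] (f i) := by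
  induction m generalizing f with
  | zero => simp
  | succ k ih =>
    rw [Function.iterate_succ_apply, ih, Nat.mul_succ, Function.iterate_add_apply]

lemma iter_prod_s10 {Y : Type*} (S : Y → Y) (m : ℕ) (f : Y × Y) :
    ((fun p : Y × Y => (S p.1, S p.2))^[m] f) = (S^[m] f.1, S^[m] f.2) := by
  induction m generalizing f with
  | zero => simp
  | succ k ih => rw [Function.iterate_succ_apply, ih]; rfl

lemma PropQ.multi {X : Type*} [MetricSpace X] {T : X → X} {n : ℕ} {a : Fin n → ℕ}
    (h : PropQ T a) : MultiTransTop a T := by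
  intro U V hU hV ⟨u, hu⟩ ⟨v, hv⟩
  obtain ⟨e1, he1, h1⟩ := Metric.isOpen_iff.1 hU u hu
  obtain ⟨e2, he2, h2⟩ := Metric.isOpen_iff.1 hV v hv
  obtain ⟨m, hm⟩ := h u v v (min e1 e2) (lt_min he1 he2)
  choose p q hp hq hv hw using hm
  refine ⟨m, _, ⟨p, h1 ?_, rfl⟩, h2 ?_⟩
  · rw [Metric.mem_ball, dist_pi_lt_iff he1]
    exact fun i => (hp i).trans_le (min_le_left _ _)
  · rw [Metric.mem_ball, dist_pi_lt_iff he2]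
    intro i
    rw [iter_pi]
    exact (hv i).trans_le (min_le_right _ _)

lemma PropQ.wm {X : Type*} [MetricSpace X] {T : X → X} (hT : Continuous T)
    (hTs : Function.Surjective T) {n : ℕ} (hn : 0 < n) {a : Fin n → ℕ}
    (h : PropQ T a) : TopWeakMix T := by
  rintro U V hU hV ⟨⟨u1, u2⟩, hu⟩ ⟨⟨v1, v2⟩, hv⟩
  obtain ⟨e1, he1, h1⟩ := Metric.isOpen_iff.1 hU _ hu
  obtain ⟨e2, he2, h2⟩ := Metric.isOpen_iff.1 hV _ hv
  let i0 : Fin n := ⟨0, hn⟩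
  obtain ⟨m, hm⟩ := h (fun _ => u1) (fun _ => u2) (fun _ => u2) e1 he1
  obtain ⟨p, -, hp, -, hp2, -⟩ := hm i0
  set k := a i0 * m
  have ck : Continuous (T^[k]) := hT.iterate k
  obtain ⟨y2, hy2⟩ := hTs.iterate k v2
  have o1 : IsOpen {x | dist x u1 < e1 ∧ dist (T^[k] x) u2 < e1} :=
    IsOpen.and (isOpen_lt (continuous_id.dist continuous_const) continuous_const)
      (isOpen_lt (ck.dist continuous_const) continuous_const)
  have o2 : IsOpen {x | dist (T^[k] x) v2 < e2} := isOpen_lt (by fun_prop) continuous_const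
  obtain ⟨d1, hd1, g1⟩ := Metric.isOpen_iff.1 o1 p ⟨hp, hp2⟩
  obtain ⟨d2, hd2, g2⟩ := Metric.isOpen_iff.1 o2 y2 (by simpa [hy2] using he2)
  obtain ⟨M, hM⟩ := h (fun _ => p) (fun _ => v1) (fun _ => y2) (min d1 (min d2 e2)) (by positivity)
  obtain ⟨p', q', hp', hq', hv', hw'⟩ := hM i0
  have l1 : min d1 (min d2 e2) ≤ d1 := min_le_left _ _
  have l2 : min d1 (min d2 e2) ≤ d2 := (min_le_right _ _).trans (min_le_left _ _)
  have l3 : min d1 (min d2 e2) ≤ e2 := (min_le_right _ _).trans (min_le_right _ _)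
  have r1 := g1 (Metric.mem_ball.2 (hp'.trans_le l1))
  have r2 := g1 (Metric.mem_ball.2 (hq'.trans_le l1))
  have r3 := g2 (Metric.mem_ball.2 (hw'.trans_le l2))
  refine ⟨a i0 * M, _, ⟨(p', T^[k] q'), h1 ?_, rfl⟩, h2 ?_⟩
  · rw [Metric.mem_ball, Prod.dist_eq]
    exact max_lt r1.1 r2.2
  · rw [Metric.mem_ball, iter_prod_s10, Prod.dist_eq]
    refine max_lt (hv'.trans_le l3) ?_
    simp only [mem_setOf_eq] at r3 ⊢
    rwa [← Function.iterate_add_apply, add_comm, Function.iterate_add_apply]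

lemma wm_finset {X : Type*} [MetricSpace X] [Nonempty X] {T : X → X} (hT : Continuous T)
    (h : TopWeakMix T) {ε : ℝ} (hε : 0 < ε) (F : Finset (X × X)) :
    ∃ U V : Set X, IsOpen U ∧ IsOpen V ∧ U.Nonempty ∧ V.Nonempty ∧
      ∀ k, (∃ z ∈ U, T^[k] z ∈ V) → ∀ p ∈ F, ∃ z, dist z p.1 < ε ∧ dist (T^[k] z) p.2 < ε := by
  induction F using Finset.induction_on with
  | empty => exact ⟨univ, univ, isOpen_univ, isOpen_univ, univ_nonempty, univ_nonempty, by simp⟩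
  | insert p F hp ih =>
    obtain ⟨U, V, hU, hV, neU, neV, hh⟩ := ih
    obtain ⟨k, _, ⟨⟨x, y⟩, ⟨hx, hy⟩, rfl⟩, hk⟩ := h (U ×ˢ V) (ball p.1 ε ×ˢ ball p.2 ε) (hU.prod hV)
      (isOpen_ball.prod isOpen_ball) (neU.prod neV)
      ((nonempty_ball.2 hε).prod (nonempty_ball.2 hε))
    rw [iter_prod_s10] at hk
    have ck : Continuous (T^[k]) := hT.iterate k
    refine ⟨U ∩ T^[k] ⁻¹' ball p.1 ε, V ∩ T^[k] ⁻¹' ball p.2 ε, hU.inter (isOpen_ball.preimage ck),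
      hV.inter (isOpen_ball.preimage ck), ⟨x, hx, hk.1⟩, ⟨y, hy, hk.2⟩, ?_⟩
    rintro l ⟨z, ⟨hz1, hz2⟩, hz3, hz4⟩ q hq
    rcases Finset.mem_insert.1 hq with rfl | hq
    · refine ⟨T^[k] z, hz2, ?_⟩
      rw [← Function.iterate_add_apply, add_comm, Function.iterate_add_apply]
      exact hz4
    · exact hh l ⟨z, hz1, hz3⟩ q hq

lemma propP_of {X : Type*} [MetricSpace X] [Nonempty X] {T : X → X} (hT : Continuous T)
    (h : TopWeakMix T) {n : ℕ} {a : Fin n → ℕ} (h2 : MultiTransTop a T) : PropP T a := by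
  intro s t ε hε
  choose U V hU hV neU neV hh using fun i => wm_finset hT h hε (s i ×ˢ t i)
  obtain ⟨m, _, ⟨f, hf, rfl⟩, hm⟩ := h2 (univ.pi U) (univ.pi V)
    (isOpen_set_pi finite_univ fun i _ => hU i) (isOpen_set_pi finite_univ fun i _ => hV i)
    (univ_pi_nonempty_iff.2 neU) (univ_pi_nonempty_iff.2 neV)
  have key : ∀ i x y, ∃ z, x ∈ s i → y ∈ t i → dist z x < ε ∧ dist (T^[a i * m] z) y < ε := by
    intro i x y
    by_cases hx : x ∈ s i ∧ y ∈ t i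
    · have := hm i (mem_univ i)
      rw [iter_pi] at this
      obtain ⟨z, hz⟩ := hh i (a i * m) ⟨f i, hf i (mem_univ i), this⟩ (x, y)
        (Finset.mem_product.2 hx)
      exact ⟨z, fun _ _ => hz⟩
    · exact ⟨x, fun h1 h2 => absurd ⟨h1, h2⟩ hx⟩
  choose z hz using key
  exact ⟨m, z, fun i x hx y hy => hz i x y hx hy⟩

lemma coe_hyper_iter {X : Type*} [MetricSpace X] (T : X → X) (hT : Continuous T)
    (k : ℕ) (A : NonemptyCompacts X) :
    (((hyper T hT)^[k] A : NonemptyCompacts X) : Set X) = T^[k] '' (A : Set X) := by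
  induction k generalizing A with
  | zero => simp
  | succ k ih =>
    rw [Function.iterate_succ_apply, ih, Function.iterate_succ, image_comp]; rfl

lemma hd_ne_top {X : Type*} [MetricSpace X] [CompactSpace X] {A B : Set X} (hA : A.Nonempty)
    (hB : B.Nonempty) : hausdorffEDist A B ≠ ⊤ :=
  hausdorffEDist_ne_top_of_nonempty_of_bounded hA hB
    (isBounded_of_compactSpace) (isBounded_of_compactSpace)

/-- key consequence for sets -/
lemma sets_to_points {X : Type*} [MetricSpace X] [CompactSpace X] {S : X → X} {E : Set X}
    {u v w : X} {ε : ℝ}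
    (hE : E.Nonempty) (h1 : hausdorffDist E {u} < ε) (h2 : hausdorffDist (S '' E) {v, w} < ε) :
    ∃ p q : X, dist p u < ε ∧ dist q u < ε ∧ dist (S p) v < ε ∧ dist (S q) w < ε := by
  have f1 : hausdorffEDist E {u} ≠ ⊤ := hd_ne_top hE (singleton_nonempty _)
  have f2 : hausdorffEDist (S '' E) {v, w} ≠ ⊤ := hd_ne_top (hE.image _) (insert_nonempty _ _)
  have aux : ∀ p ∈ E, dist p u < ε := by
    intro p hp
    obtain ⟨y, hy, hd⟩ := exists_dist_lt_of_hausdorffDist_lt hp h1 f1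
    rw [mem_singleton_iff.1 hy] at hd
    exact hd
  obtain ⟨_, ⟨p, hp, rfl⟩, hpv⟩ := exists_dist_lt_of_hausdorffDist_lt' (y := v) (by simp) h2 f2
  obtain ⟨_, ⟨q, hq, rfl⟩, hqv⟩ := exists_dist_lt_of_hausdorffDist_lt' (y := w) (by simp) h2 f2
  exact ⟨p, q, aux p hp, aux q hq, hpv, hqv⟩

lemma propQ_of_hyper {X : Type*} [MetricSpace X] [CompactSpace X] {T : X → X} (hT : Continuous T)
    {n : ℕ} {a : Fin n → ℕ} (h : MultiTransTop a (hyper T hT)) : PropQ T a := by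
  intro u v w ε hε
  let A : Fin n → NonemptyCompacts X := fun i => ⟨⟨{u i}, isCompact_singleton⟩, singleton_nonempty _⟩
  let B : Fin n → NonemptyCompacts X := fun i =>
    ⟨⟨{v i, w i}, (Set.toFinite _).isCompact⟩, insert_nonempty _ _⟩
  obtain ⟨m, _, ⟨E, hE, rfl⟩, hm⟩ := h (ball A ε) (ball B ε) isOpen_ball isOpen_ball
    (nonempty_ball.2 hε) (nonempty_ball.2 hε)
  rw [mem_ball, dist_pi_lt_iff hε] at hE hm
  refine ⟨m, fun i => ?_⟩
  have h1 := hE i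
  have h2 := hm i
  rw [iter_pi, NonemptyCompacts.dist_eq, coe_hyper_iter] at h2
  rw [NonemptyCompacts.dist_eq] at h1
  exact sets_to_points (E i).nonempty h1 h2

lemma hd_pairs {X : Type*} [MetricSpace X] {A B C D : Set X} {S : X → X} {z : X → X → X} {δ : ℝ}
    (hδ : 0 < δ) (hC : C.Nonempty) (hD : D.Nonempty) (hCA : C ⊆ A) (hDB : D ⊆ B)
    (hA : ∀ x ∈ A, ∃ p ∈ C, dist x p ≤ δ) (hB : ∀ x ∈ B, ∃ p ∈ D, dist x p ≤ δ)
    (hz : ∀ x ∈ C, ∀ y ∈ D, dist (z x y) x < δ ∧ dist (S (z x y)) y < δ) :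
    hausdorffDist (image2 z C D) A ≤ 2 * δ ∧ hausdorffDist (S '' image2 z C D) B ≤ 2 * δ := by
  obtain ⟨c, hc⟩ := hC
  obtain ⟨d, hd⟩ := hD
  constructor
  · refine hausdorffDist_le_of_mem_dist (by positivity) ?_ ?_
    · rintro _ ⟨x, hx, y, hy, rfl⟩
      exact ⟨x, hCA hx, by linarith [(hz x hx y hy).1]⟩
    · intro x hx
      obtain ⟨p, hp, hxp⟩ := hA x hx
      refine ⟨z p d, ⟨p, hp, d, hd, rfl⟩, ?_⟩
      have := dist_triangle_right x (z p d) p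
      linarith [(hz p hp d hd).1]
  · refine hausdorffDist_le_of_mem_dist (by positivity) ?_ ?_
    · rintro _ ⟨_, ⟨x, hx, y, hy, rfl⟩, rfl⟩
      exact ⟨y, hDB hy, by linarith [(hz x hx y hy).2]⟩
    · intro x hx
      obtain ⟨p, hp, hxp⟩ := hB x hx
      refine ⟨S (z c p), ⟨_, ⟨c, hc, p, hp, rfl⟩, rfl⟩, ?_⟩
      have := dist_triangle_right x (S (z c p)) p
      linarith [(hz c hc p hp).2]

lemma compact_net {X : Type*} [MetricSpace X] (A : NonemptyCompacts X) {δ : ℝ} (hδ : 0 < δ) :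
    ∃ s : Finset X, s.Nonempty ∧ (s : Set X) ⊆ A ∧ ∀ x ∈ (A : Set X), ∃ p ∈ (s : Set X),
      dist x p ≤ δ := by
  obtain ⟨t, ht, hf, hc⟩ := finite_cover_balls_of_compact A.isCompact hδ
  have key : ∀ x ∈ (A : Set X), ∃ p ∈ t, dist x p ≤ δ := by
    intro x hx
    have := hc hx
    simp only [mem_iUnion, mem_ball] at this
    obtain ⟨p, hp, hd⟩ := this
    exact ⟨p, hp, hd.le⟩
  refine ⟨hf.toFinset, ?_, by simpa using ht, by simpa using key⟩
  obtain ⟨x, hx⟩ := A.nonempty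
  obtain ⟨p, hp, -⟩ := key x hx
  exact ⟨p, by simpa using hp⟩

lemma hyper_of_propP {X : Type*} [MetricSpace X] {T : X → X} (hT : Continuous T)
    {n : ℕ} {a : Fin n → ℕ} (h : PropP T a) : MultiTransTop a (hyper T hT) := by
  intro U V hU hV ⟨A, hA⟩ ⟨B, hB⟩
  obtain ⟨e1, he1, h1⟩ := Metric.isOpen_iff.1 hU A hA
  obtain ⟨e2, he2, h2⟩ := Metric.isOpen_iff.1 hV B hB
  obtain ⟨δ, hδ, hd1, hd2⟩ : ∃ δ : ℝ, 0 < δ ∧ 2 * δ < e1 ∧ 2 * δ < e2 := by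
    refine ⟨min e1 e2 / 4, by positivity, ?_, ?_⟩
    · linarith [min_le_left e1 e2, lt_min he1 he2]
    · linarith [min_le_right e1 e2, lt_min he1 he2]
  choose s s1 s2 s3 using fun i => compact_net (A i) hδ
  choose t t1 t2 t3 using fun i => compact_net (B i) hδ
  obtain ⟨m, z, hz⟩ := h s t δ hδ
  let E : Fin n → NonemptyCompacts X := fun i =>
    ⟨⟨image2 (z i) (s i) (t i), (((s i).finite_toSet.image2 _ (t i).finite_toSet)).isCompact⟩,
      (s1 i).to_set.image2 (t1 i).to_set⟩
  have key := fun i => hd_pairs (S := T^[a i * m]) hδ (s1 i).to_set (t1 i).to_set (s2 i) (t2 i)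
    (s3 i) (t3 i) (hz i)
  refine ⟨m, _, ⟨E, h1 ?_, rfl⟩, h2 ?_⟩
  · rw [mem_ball, dist_pi_lt_iff he1]
    exact fun i => (key i).1.trans_lt hd1
  · rw [mem_ball, dist_pi_lt_iff he2]
    intro i
    rw [iter_pi, NonemptyCompacts.dist_eq, coe_hyper_iter]
    exact (key i).2.trans_lt hd2

/-! fuzzy part -/

lemma isFuzzy_of_cuts {X : Type*} [TopologicalSpace X] {A : X → ℝ} (h : ∀ x, A x ∈ Icc (0:ℝ) 1)
    (hc : ∀ α, 0 < α → IsClosed (cut A α)) : IsFuzzy A := by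
  refine ⟨h, upperSemicontinuous_iff_isClosed_preimage.2 fun y => ?_⟩
  by_cases hy : 0 < y
  · exact hc y hy
  · have : A ⁻¹' Ici y = univ := by
      ext x
      simp only [mem_preimage, mem_Ici, mem_univ, iff_true]
      linarith [(h x).1]
    rw [this]; exact isClosed_univ

lemma IsFuzzy.closed {X : Type*} [TopologicalSpace X] {A : X → ℝ} (h : IsFuzzy A) (α : ℝ) :
    IsClosed (cut A α) := h.2.isClosed_preimage α

lemma cut_zadeh {X : Type*} [MetricSpace X] [CompactSpace X] {T : X → X} (hT : Continuous T)
    {A : X → ℝ} (h : IsFuzzy A) {α : ℝ} (hα : 0 < α) : cut (zadeh T A) α = T '' cut A α := by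
  have bdd : ∀ x, BddAbove (A '' (T ⁻¹' {x})) := fun x =>
    ⟨1, by rintro _ ⟨y, -, rfl⟩; exact (h.1 y).2⟩
  ext x
  constructor
  · intro hx
    change α ≤ sSup (A '' (T ⁻¹' {x})) at hx
    have ne : (T ⁻¹' {x}).Nonempty := by
      by_contra hne
      rw [not_nonempty_iff_eq_empty.1 hne] at hx
      simp at hx
      linarith
    have hcl : IsClosed (T ⁻¹' {x}) := isClosed_singleton.preimage hT
    obtain ⟨y, hy, hmax⟩ := UpperSemicontinuousOn.exists_isMaxOn ne hcl.isCompact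
      (h.2.upperSemicontinuousOn _)
    refine ⟨y, ?_, hy⟩
    refine hx.trans (csSup_le (ne.image A) ?_)
    rintro _ ⟨w, hw, rfl⟩
    exact hmax hw
  · rintro ⟨y, hy, rfl⟩
    exact le_trans hy (le_csSup (bdd _) ⟨y, rfl, rfl⟩)

lemma IsFuzzy.zadeh {X : Type*} [MetricSpace X] [CompactSpace X] {T : X → X} (hT : Continuous T)
    {A : X → ℝ} (h : IsFuzzy A) : IsFuzzy (zadeh T A) := by
  refine isFuzzy_of_cuts (fun x => ⟨?_, ?_⟩) ?_
  · apply Real.sSup_nonneg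
    rintro _ ⟨y, -, rfl⟩; exact (h.1 y).1
  · apply Real.sSup_le _ zero_le_one
    rintro _ ⟨y, -, rfl⟩; exact (h.1 y).2
  · intro α hα
    rw [cut_zadeh hT h hα]
    exact ((h.closed α).isCompact.image hT).isClosed

lemma cut_zadeh_iter {X : Type*} [MetricSpace X] [CompactSpace X] {T : X → X} (hT : Continuous T)
    {A : X → ℝ} (h : IsFuzzy A) {α : ℝ} (hα : 0 < α) (k : ℕ) :
    cut ((zadeh T)^[k] A) α = T^[k] '' cut A α := by
  induction k generalizing A with
  | zero => simp
  | succ k ih =>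
    rw [Function.iterate_succ_apply, ih (h.zadeh hT), Function.iterate_succ, image_comp,
      cut_zadeh hT h hα]

lemma le_dinf {X : Type*} [MetricSpace X] [CompactSpace X] {A B : X → ℝ} {α : ℝ}
    (hα : α ∈ Ioc (0:ℝ) 1) (hA : (cut A α).Nonempty) (hB : (cut B α).Nonempty) :
    hausdorffDist (cut A α) (cut B α) ≤ dinf A B := by
  refine le_csSup ⟨diam (univ : Set X), ?_⟩ ⟨α, hα, ?_⟩
  · rintro _ ⟨β, -, rfl⟩
    unfold eHd
    split_ifs with hh
    · rcases hh with ⟨h1, h2⟩ | ⟨h1, h2⟩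
      · exact (hausdorffDist_le_diam h1 isBounded_of_compactSpace h2
          isBounded_of_compactSpace).trans (diam_mono (subset_univ _) isBounded_of_compactSpace)
      · rw [h1, hausdorffDist_empty']; exact diam_nonneg
    · exact le_rfl
  · unfold eHd
    rw [if_pos (Or.inl ⟨hA, hB⟩)]

lemma dinf_le {X : Type*} [MetricSpace X] {A B : X → ℝ} {lam r : ℝ} (hr : 0 ≤ r)
    (h1 : ∀ α, 0 < α → α ≤ lam → (cut A α).Nonempty ∧ (cut B α).Nonempty ∧
      hausdorffDist (cut A α) (cut B α) ≤ r)
    (h2 : ∀ α, lam < α → 0 < α → cut A α = ∅ ∧ cut B α = ∅) : dinf A B ≤ r := by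
  refine csSup_le ⟨_, 1, by simp, rfl⟩ ?_
  rintro _ ⟨α, hα, rfl⟩
  unfold eHd
  rcases le_or_gt α lam with h | h
  · obtain ⟨a1, a2, a3⟩ := h1 α hα.1 h
    rw [if_pos (Or.inl ⟨a1, a2⟩)]; exact a3
  · have := h2 α h hα.1
    rw [if_pos (Or.inr this), this.1, hausdorffDist_empty']; exact hr

lemma indic {X : Type*} [MetricSpace X] {lam : ℝ} (hl : lam ∈ Ioc (0:ℝ) 1) {S : Set X}
    (hS : S.Nonempty) (hc : IsClosed S) :
    ∃ A ∈ Feq X lam, cut A lam = S := by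
  have hcut : ∀ α, 0 < α → cut (fun x => if x ∈ S then lam else 0) α = {x | x ∈ S ∧ α ≤ lam} := by
    intro α hα
    ext x
    by_cases hx : x ∈ S <;> simp [cut, hx, hα]
  refine ⟨fun x => if x ∈ S then lam else 0, ⟨isFuzzy_of_cuts ?_ ?_, ?_, ?_⟩, ?_⟩
  · intro x
    try dsimp only
    split_ifs
    · exact ⟨hl.1.le, hl.2⟩
    · simp
  · intro α hα
    rw [hcut α hα]
    by_cases h : α ≤ lam
    · simpa [h] using hc
    · simp [h]
  · obtain ⟨x, hx⟩ := hS
    exact ⟨x, by simp [hx]⟩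
  · intro x
    dsimp only
    split_ifs
    · exact le_rfl
    · exact hl.1.le
  · rw [hcut lam hl.1]; simp

lemma propQ_of_fuzzy {X : Type*} [MetricSpace X] [CompactSpace X] {T : X → X} (hT : Continuous T)
    {n : ℕ} {a : Fin n → ℕ} {lam : ℝ} (hl : lam ∈ Ioc (0:ℝ) 1)
    (h : MultiTransOn a dinf (zadeh T) (Feq X lam)) : PropQ T a := by
  intro u v w ε hε
  choose A hA hA2 using fun i => indic hl (singleton_nonempty (u i)) isClosed_singleton
  choose B hB hB2 using fun i => indic hl (insert_nonempty (v i) {w i}) (Set.toFinite _).isClosed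
  obtain ⟨m, E, hE⟩ := h A hA B hB ε hε
  refine ⟨m, fun i => ?_⟩
  obtain ⟨hEF, h1, h2⟩ := hE i
  rw [← Function.iterate_mul] at h2
  have ne : (cut (E i) lam).Nonempty := by
    obtain ⟨x, hx⟩ := hEF.2.1
    exact ⟨x, hx.ge⟩
  have ci := cut_zadeh_iter hT hEF.1 hl.1 (a i * m)
  have g1 := (le_dinf hl ne (by rw [hA2]; exact singleton_nonempty _)).trans_lt h1
  have g2 := (le_dinf hl (by rw [ci]; exact ne.image _)
    (by rw [hB2]; exact insert_nonempty _ _)).trans_lt h2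
  rw [hA2] at g1
  rw [ci, hB2] at g2
  exact sets_to_points ne g1 g2

lemma fuzzy_net {X : Type*} [MetricSpace X] [CompactSpace X] {A : X → ℝ} (hA : IsFuzzy A)
    {δ : ℝ} (hδ : 0 < δ) : ∃ P : Finset X, ∀ x, ∃ p ∈ P, A x ≤ A p ∧ dist x p ≤ δ := by
  obtain ⟨t, -, hf, hc⟩ := finite_cover_balls_of_compact (isCompact_univ (X := X)) (half_pos hδ)
  have key : ∀ c : X, ∃ p ∈ closedBall c (δ / 2), ∀ x ∈ closedBall c (δ / 2), A x ≤ A p := by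
    intro c
    obtain ⟨p, hp, hm⟩ := UpperSemicontinuousOn.exists_isMaxOn
      (nonempty_closedBall.2 (half_pos hδ).le) (isClosed_closedBall (x := c) (ε := δ/2)).isCompact
      (hA.2.upperSemicontinuousOn _)
    exact ⟨p, hp, fun x hx => hm hx⟩
  choose p hp hm using key
  refine ⟨hf.toFinset.image p, fun x => ?_⟩
  have := hc (mem_univ x)
  simp only [mem_iUnion, mem_ball] at this
  obtain ⟨c, hct, hd⟩ := this
  refine ⟨p c, Finset.mem_image_of_mem _ (by simpa using hct), hm c x (mem_closedBall.2 hd.le), ?_⟩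
  have h1 := mem_closedBall.1 (hp c)
  linarith [dist_triangle_right x (p c) c]

lemma fuzzy_of_propP {X : Type*} [MetricSpace X] [CompactSpace X] {T : X → X} (hT : Continuous T)
    {n : ℕ} {a : Fin n → ℕ} {lam : ℝ} (hl : lam ∈ Ioc (0:ℝ) 1)
    (h : PropP T a) : MultiTransOn a dinf (zadeh T) (Feq X lam) := by
  intro A hA B hB ε hε
  obtain ⟨δ, hδ, hd⟩ : ∃ δ : ℝ, 0 < δ ∧ 2 * δ < ε := ⟨ε / 4, by positivity, by linarith⟩
  choose s hs using fun i => fuzzy_net (hA i).1 hδ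
  choose t ht using fun i => fuzzy_net (hB i).1 hδ
  obtain ⟨m, z, hz⟩ := h s t δ hδ
  let E : Fin n → X → ℝ := fun i x => sSup ((fun p : X × X => min (A i p.1) (B i p.2)) ''
    {p | (p.1 ∈ s i ∧ p.2 ∈ t i) ∧ z i p.1 p.2 = x})
  refine ⟨m, E, fun i => ?_⟩
  have hfin : ∀ x, ({p : X × X | (p.1 ∈ s i ∧ p.2 ∈ t i) ∧ z i p.1 p.2 = x}).Finite := by
    intro x
    refine (s i ×ˢ t i).finite_toSet.subset ?_
    rintro p ⟨hp, -⟩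
    simpa using hp
  have cutE : ∀ α, 0 < α → cut (E i) α =
      image2 (z i) {p | p ∈ s i ∧ α ≤ A i p} {q | q ∈ t i ∧ α ≤ B i q} := by
    intro α hα
    ext x
    constructor
    · intro hx
      change α ≤ sSup _ at hx
      have ne : ({p : X × X | (p.1 ∈ s i ∧ p.2 ∈ t i) ∧ z i p.1 p.2 = x}).Nonempty := by
        by_contra hne
        rw [not_nonempty_iff_eq_empty.1 hne] at hx
        simp at hx
        linarith
      obtain ⟨p, ⟨⟨hp1, hp2⟩, hp3⟩, hp4⟩ := (ne.image _).csSup_mem ((hfin x).image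
        (fun p : X × X => min (A i p.1) (B i p.2)))
      rw [← hp4] at hx
      exact ⟨p.1, ⟨hp1, (le_min_iff.1 hx).1⟩, p.2, ⟨hp2, (le_min_iff.1 hx).2⟩, hp3⟩
    · rintro ⟨p, ⟨hp1, hp2⟩, q, ⟨hq1, hq2⟩, rfl⟩
      exact (le_min hp2 hq2).trans (le_csSup ((hfin _).image _).bddAbove
        ⟨(p, q), ⟨⟨hp1, hq1⟩, rfl⟩, rfl⟩)
  have neC : ∀ α ≤ lam, ({p | p ∈ s i ∧ α ≤ A i p}).Nonempty := by
    intro α hα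
    obtain ⟨x, hx⟩ := (hA i).2.1
    obtain ⟨p, hp, hp1, -⟩ := hs i x
    exact ⟨p, hp, by linarith⟩
  have neD : ∀ α ≤ lam, ({p | p ∈ t i ∧ α ≤ B i p}).Nonempty := by
    intro α hα
    obtain ⟨x, hx⟩ := (hB i).2.1
    obtain ⟨p, hp, hp1, -⟩ := ht i x
    exact ⟨p, hp, by linarith⟩
  have Ele : ∀ x, E i x ≤ lam := by
    intro x
    apply Real.sSup_le _ hl.1.le
    rintro _ ⟨p, -, rfl⟩
    exact (min_le_left _ _).trans ((hA i).2.2 _)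
  have hEF : IsFuzzy (E i) := by
    refine isFuzzy_of_cuts (fun x => ⟨?_, (Ele x).trans hl.2⟩) ?_
    · apply Real.sSup_nonneg
      rintro _ ⟨p, -, rfl⟩
      exact le_min ((hA i).1.1 _).1 ((hB i).1.1 _).1
    · intro α hα
      rw [cutE α hα]
      exact (((s i).finite_toSet.subset fun p hp => hp.1).image2 _
        ((t i).finite_toSet.subset fun p hp => hp.1)).isClosed
  have key : ∀ α, 0 < α → α ≤ lam → hausdorffDist (cut (E i) α) (cut (A i) α) ≤ 2 * δ ∧
      hausdorffDist (T^[a i * m] '' cut (E i) α) (cut (B i) α) ≤ 2 * δ := by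
    intro α hα hαl
    rw [cutE α hα]
    refine hd_pairs hδ (neC α hαl) (neD α hαl) (fun p hp => hp.2) (fun p hp => hp.2) ?_ ?_ ?_
    · intro x hx
      obtain ⟨p, h1, h2, h3⟩ := hs i x
      exact ⟨p, ⟨h1, le_trans hx h2⟩, h3⟩
    · intro x hx
      obtain ⟨p, h1, h2, h3⟩ := ht i x
      exact ⟨p, ⟨h1, le_trans hx h2⟩, h3⟩
    · intro x hx y hy
      exact hz i x hx.1 y hy.1
  have neE : ∀ α, 0 < α → α ≤ lam → (cut (E i) α).Nonempty := by
    intro α hα hαl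
    rw [cutE α hα]
    exact (neC α hαl).image2 (neD α hαl)
  have emp : ∀ F : X → ℝ, (∀ x, F x ≤ lam) → ∀ α, lam < α → cut F α = ∅ := by
    intro F hF α hα
    ext x
    simp only [cut, mem_setOf_eq, mem_empty_iff_false, iff_false, not_le]
    exact (hF x).trans_lt hα
  have ne' : ∀ F ∈ Feq X lam, ∀ α ≤ lam, (cut F α).Nonempty := by
    intro F hF α hα
    obtain ⟨x, hx⟩ := hF.2.1
    exact ⟨x, hα.trans hx.ge⟩
  refine ⟨⟨hEF, ?_, Ele⟩, ?_, ?_⟩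
  · obtain ⟨x, hx⟩ := neE lam hl.1 le_rfl
    exact ⟨x, le_antisymm (Ele x) hx⟩
  · refine (dinf_le (lam := lam) (by positivity) ?_ ?_).trans_lt hd
    · exact fun α h0 h1 => ⟨neE α h0 h1, ne' _ (hA i) α h1, (key α h0 h1).1⟩
    · exact fun α h0 _ => ⟨emp _ Ele α h0, emp _ (hA i).2.2 α h0⟩
  · rw [← Function.iterate_mul]
    refine (dinf_le (lam := lam) (by positivity) ?_ ?_).trans_lt hd
    · intro α h0 h1
      rw [cut_zadeh_iter hT hEF h0]
      exact ⟨(neE α h0 h1).image _, ne' _ (hB i) α h1, (key α h0 h1).2⟩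
    · intro α h0 hp
      rw [cut_zadeh_iter hT hEF hp, emp _ Ele α h0]
      exact ⟨image_empty _, emp _ (hB i).2.2 α h0⟩

end helpers

/-- For a vector `𝐚 = (a₁, …, a_n)` of positive integers: `(X,T)` is weakly mixing and
`𝐚`-transitive iff `(K(X), T_K)` is `𝐚`-transitive iff the Zadeh extension on every
(equivalently, some) `𝔽^{=λ}(X)` is `𝐚`-transitive. -/
theorem multiTrans_tfae {X : Type*} [MetricSpace X] [CompactSpace X] [Nontrivial X]
    (T : X → X) (hT : Continuous T) (hTs : Function.Surjective T)
    {n : ℕ} (hn : 0 < n) (a : Fin n → ℕ) (ha : ∀ i, 0 < a i) :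
    List.TFAE
      [TopWeakMix T ∧ MultiTransTop a T,
       MultiTransTop a (hyper T hT),
       ∀ lam ∈ Set.Ioc (0:ℝ) 1, MultiTransOn a dinf (zadeh T) (Feq X lam),
       ∃ lam ∈ Set.Ioc (0:ℝ) 1, MultiTransOn a dinf (zadeh T) (Feq X lam)] := by
  tfae_have 1 → 2 := fun h => hyper_of_propP hT (propP_of hT h.1 h.2)
  tfae_have 2 → 1 := fun h =>
    ⟨(propQ_of_hyper hT h).wm hT hTs hn, (propQ_of_hyper hT h).multi⟩
  tfae_have 1 → 3 := fun h lam hl => fuzzy_of_propP hT hl (propP_of hT h.1 h.2)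
  tfae_have 3 → 4 := fun h => ⟨1, by simp, h 1 (by simp)⟩
  tfae_have 4 → 1 := by
    rintro ⟨lam, hl, h⟩
    exact ⟨(propQ_of_fuzzy hT hl h).wm hT hTs hn, (propQ_of_fuzzy hT hl h).multi⟩
  tfae_finish
end

section
/- Let (X, T) be a dynamical system. The following statements are equivalent: (1) (X, T) is uniformly rigid; (2) (K(X), T_K) is uniformly rigid; (3) (𝔽₀(X), T_F) is uniformly rigid; (4) for every λ ∈ (0,1], (𝔽^{=λ}(X), T_F|_{𝔽^{=λ}(X)}) is uniformly rigid; (5) for every λ ∈ (0,1], (𝔽^{≥λ}(X), T_F|_{𝔽^{≥λ}(X)}) is uniformly rigid; (6) there exists λ ∈ (0,1] such that (𝔽^{=λ}(X), T_F|_{𝔽^{=λ}(X)}) is uniformly rigid; (7) there exists λ ∈ (0,1] such that (𝔽^{≥λ}(X), T_F|_{𝔽^{≥λ}(X)}) is uniformly rigid. -/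
open Metric Set TopologicalSpace Filter Function
open scoped Classical

variable {X Y : Type*}

/-- Uniform rigidity of a self-map of a metric space. -/
def UnifRigidM {Z : Type*} [PseudoMetricSpace Z] (S : Z → Z) : Prop :=
  ∀ ε > 0, ∃ n : ℕ, 1 ≤ n ∧ ∀ y : Z, dist (S^[n] y) y < ε

/-- Uniform rigidity of `S` restricted to `C`, with respect to the metric `ρ`. -/
def UnifRigidOn (ρ : Y → Y → ℝ) (S : Y → Y) (C : Set Y) : Prop :=
  ∀ ε > 0, ∃ n : ℕ, 1 ≤ n ∧ ∀ A ∈ C, ρ (S^[n] A) A < ε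

theorem aux_cut_closed {X : Type*} [TopologicalSpace X] {A : X → ℝ} (hA : IsFuzzy A) (α : ℝ) :
    IsClosed (cut A α) :=
  upperSemicontinuous_iff_isClosed_preimage.1 hA.2 α

theorem aux_cut_zadeh {X : Type*} [MetricSpace X] [CompactSpace X]
    (T : X → X) (hT : Continuous T) (hTs : Function.Surjective T) {A : X → ℝ}
    (hA : IsFuzzy A) (α : ℝ) : cut (zadeh T A) α = T '' cut A α := by
  ext x
  constructor
  · intro hx
    have hc : IsCompact (T ⁻¹' {x}) := (isClosed_singleton.preimage hT).isCompact
    have hne : (T ⁻¹' {x}).Nonempty := hTs x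
    obtain ⟨y, hy, hm⟩ := (hA.2.upperSemicontinuousOn _).exists_isMaxOn hne hc
    refine ⟨y, ?_, hy⟩
    refine le_trans (show α ≤ sSup (A '' (T ⁻¹' {x})) from hx) ?_
    apply csSup_le (hne.image A)
    rintro _ ⟨z, hz, rfl⟩
    exact hm hz
  · rintro ⟨y, hy, rfl⟩
    refine le_trans (show α ≤ A y from hy) ?_
    refine le_csSup ⟨1, ?_⟩ ⟨y, rfl, rfl⟩
    rintro _ ⟨z, -, rfl⟩
    exact (hA.1 z).2

theorem aux_zadeh_fuzzy {X : Type*} [MetricSpace X] [CompactSpace X]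
    (T : X → X) (hT : Continuous T) (hTs : Function.Surjective T) {A : X → ℝ}
    (hA : IsFuzzy A) : IsFuzzy (zadeh T A) := by
  refine ⟨fun x => ⟨?_, ?_⟩, ?_⟩
  · apply Real.sSup_nonneg
    rintro _ ⟨z, -, rfl⟩
    exact (hA.1 z).1
  · apply Real.sSup_le _ zero_le_one
    rintro _ ⟨z, -, rfl⟩
    exact (hA.1 z).2
  · rw [upperSemicontinuous_iff_isClosed_preimage]
    intro α
    change IsClosed (cut (zadeh T A) α)
    rw [aux_cut_zadeh T hT hTs hA]
    exact ((aux_cut_closed hA α).isCompact.image hT).isClosed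

theorem aux_cut_iter {X : Type*} [MetricSpace X] [CompactSpace X]
    (T : X → X) (hT : Continuous T) (hTs : Function.Surjective T) (n : ℕ) :
    ∀ {A : X → ℝ}, IsFuzzy A → ∀ α, cut ((zadeh T)^[n] A) α = T^[n] '' cut A α := by
  induction n with
  | zero => intro A _ α; simp
  | succ n ih =>
    intro A hA α
    rw [Function.iterate_succ_apply, ih (aux_zadeh_fuzzy T hT hTs hA),
      aux_cut_zadeh T hT hTs hA, Function.iterate_succ, Set.image_comp]

theorem aux_hd {X : Type*} [MetricSpace X] (S : X → X) {ε : ℝ} (hε : 0 ≤ ε)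
    (h : ∀ x, dist (S x) x ≤ ε) (A : Set X) : hausdorffDist (S '' A) A ≤ ε := by
  apply hausdorffDist_le_of_mem_dist hε
  · rintro _ ⟨x, hx, rfl⟩
    exact ⟨x, hx, h x⟩
  · intro x hx
    exact ⟨S x, ⟨x, hx, rfl⟩, by rw [dist_comm]; exact h x⟩

theorem aux_fwd {X : Type*} [MetricSpace X] [CompactSpace X]
    (T : X → X) (hT : Continuous T) (hTs : Function.Surjective T) (h : UnifRigidM T)
    (C : Set (X → ℝ)) (hC : ∀ A ∈ C, IsFuzzy A) : UnifRigidOn dinf (zadeh T) C := by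
  intro ε hε
  obtain ⟨n, hn, hd⟩ := h (ε / 2) (by positivity)
  refine ⟨n, hn, fun A hA => lt_of_le_of_lt ?_ (half_lt_self hε)⟩
  apply Real.sSup_le _ (by positivity)
  rintro _ ⟨α, -, rfl⟩
  rw [aux_cut_iter T hT hTs n (hC A hA), eHd, if_pos]
  · exact aux_hd _ (by positivity) (fun x => (hd x).le) _
  · rcases (cut A α).eq_empty_or_nonempty with h0 | h0
    · right; simp [h0]
    · left; exact ⟨h0.image _, h0⟩

theorem aux_eHd_le {X : Type*} [MetricSpace X] [CompactSpace X] (A B : Set X) :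
    eHd X A B ≤ Metric.diam (Set.univ : Set X) := by
  have hb : Bornology.IsBounded (Set.univ : Set X) := isCompact_univ.isBounded
  unfold eHd
  split_ifs with h
  · rcases h with ⟨hA, hB⟩ | ⟨rfl, rfl⟩
    · exact (hausdorffDist_le_diam hA (hb.subset (subset_univ _)) hB
        (hb.subset (subset_univ _))).trans (diam_mono (subset_univ _) hb)
    · simpa using diam_nonneg
  · exact le_rfl

/-- Fuzzy point. -/
noncomputable def auxPt {X : Type*} (lam : ℝ) (x : X) : X → ℝ := fun y => if y = x then lam else 0

theorem aux_cut_pt {X : Type*} {lam : ℝ} (x : X) {α : ℝ} (h0 : 0 < α) (h1 : α ≤ lam) :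
    cut (auxPt lam x) α = {x} := by
  ext y
  by_cases h : y = x <;> simp [cut, auxPt, h, h0, h1]

theorem aux_pt_fuzzy {X : Type*} [MetricSpace X] {lam : ℝ} (hl : lam ∈ Set.Ioc (0:ℝ) 1) (x : X) :
    IsFuzzy (auxPt lam x) := by
  refine ⟨fun y => ?_, ?_⟩
  · by_cases h : y = x <;> simp [auxPt, h, hl.1.le, hl.2]
  · rw [upperSemicontinuous_iff_isClosed_preimage]
    intro α
    change IsClosed (cut (auxPt lam x) α)
    rcases le_or_gt α 0 with h | h
    · convert isClosed_univ
      ext y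
      by_cases h' : y = x <;> simp [cut, auxPt, h', h, h.trans hl.1.le]
    · rcases le_or_gt α lam with h1 | h1
      · rw [aux_cut_pt x h h1]; exact isClosed_singleton
      · convert isClosed_empty
        ext y
        by_cases h' : y = x <;> simp [cut, auxPt, h', h, h1]

theorem aux_pt_eq {X : Type*} [MetricSpace X] {lam : ℝ} (hl : lam ∈ Set.Ioc (0:ℝ) 1) (x : X) :
    auxPt lam x ∈ Feq X lam := by
  refine ⟨aux_pt_fuzzy hl x, ⟨x, by simp [auxPt]⟩, fun y => ?_⟩
  by_cases h : y = x <;> simp [auxPt, h, hl.1.le]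

theorem aux_bwd {X : Type*} [MetricSpace X] [CompactSpace X]
    (T : X → X) (hT : Continuous T) (hTs : Function.Surjective T)
    (C : Set (X → ℝ)) {lam : ℝ} (hl : lam ∈ Set.Ioc (0:ℝ) 1) (hC : ∀ x, auxPt lam x ∈ C)
    (h : UnifRigidOn dinf (zadeh T) C) : UnifRigidM T := by
  intro ε hε
  obtain ⟨n, hn, hd⟩ := h ε hε
  refine ⟨n, hn, fun x => lt_of_le_of_lt ?_ (hd _ (hC x))⟩
  refine le_csSup ⟨Metric.diam (Set.univ : Set X), ?_⟩ ⟨lam, hl, ?_⟩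
  · rintro _ ⟨α, -, rfl⟩
    exact aux_eHd_le _ _
  · rw [aux_cut_iter T hT hTs n (aux_pt_fuzzy hl x), aux_cut_pt x hl.1 le_rfl, eHd, if_pos]
    · simp
    · left; simp

theorem aux_hyper_iter {X : Type*} [MetricSpace X] (T : X → X) (hT : Continuous T) (n : ℕ) :
    ∀ A : NonemptyCompacts X, (((hyper T hT)^[n] A : NonemptyCompacts X) : Set X) =
      T^[n] '' (A : Set X) := by
  induction n with
  | zero => intro A; simp
  | succ n ih =>
    intro A
    rw [Function.iterate_succ_apply, ih, Function.iterate_succ, Set.image_comp]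
    rfl

/-- Uniform rigidity of `(X,T)`, of `(K(X), T_K)`, of the Zadeh extension on `𝔽₀(X)`,
and of the Zadeh extension on every (equivalently, some) `𝔽^{=λ}(X)` or `𝔽^{≥λ}(X)`
are all equivalent. -/
theorem uniformlyRigid_tfae {X : Type*} [MetricSpace X] [CompactSpace X] [Nontrivial X]
    (T : X → X) (hT : Continuous T) (hTs : Function.Surjective T) :
    List.TFAE
      [UnifRigidM T,
       UnifRigidM (hyper T hT),
       UnifRigidOn dinf (zadeh T) (F0 X),
       ∀ lam ∈ Set.Ioc (0:ℝ) 1, UnifRigidOn dinf (zadeh T) (Feq X lam),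
       ∀ lam ∈ Set.Ioc (0:ℝ) 1, UnifRigidOn dinf (zadeh T) (Fge X lam),
       ∃ lam ∈ Set.Ioc (0:ℝ) 1, UnifRigidOn dinf (zadeh T) (Feq X lam),
       ∃ lam ∈ Set.Ioc (0:ℝ) 1, UnifRigidOn dinf (zadeh T) (Fge X lam)] := by
  have h1 : (1:ℝ) ∈ Set.Ioc (0:ℝ) 1 := by simp
  tfae_have 1 → 2 := by
    intro h ε hε
    obtain ⟨n, hn, hd⟩ := h (ε / 2) (by positivity)
    refine ⟨n, hn, fun A => lt_of_le_of_lt ?_ (half_lt_self hε)⟩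
    rw [NonemptyCompacts.dist_eq, aux_hyper_iter]
    exact aux_hd _ (by positivity) (fun x => (hd x).le) _
  tfae_have 2 → 1 := by
    intro h ε hε
    obtain ⟨n, hn, hd⟩ := h ε hε
    refine ⟨n, hn, fun x => ?_⟩
    have := hd {x}
    rw [NonemptyCompacts.dist_eq, aux_hyper_iter] at this
    simpa using this
  tfae_have 1 → 3 := fun h => aux_fwd T hT hTs h _ fun A hA => hA.1
  tfae_have 1 → 4 := fun h lam _ => aux_fwd T hT hTs h _ fun A hA => hA.1
  tfae_have 1 → 5 := fun h lam _ => aux_fwd T hT hTs h _ fun A hA => hA.1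
  tfae_have 4 → 6 := fun h => ⟨1, h1, h 1 h1⟩
  tfae_have 5 → 7 := fun h => ⟨1, h1, h 1 h1⟩
  tfae_have 3 → 1 := aux_bwd T hT hTs (F0 X) h1
    fun x => ⟨aux_pt_fuzzy h1 x, x, by simp [auxPt]⟩
  tfae_have 6 → 1 := fun ⟨_, hl, h⟩ => aux_bwd T hT hTs _ hl (aux_pt_eq hl) h
  tfae_have 7 → 1 := fun ⟨lam, hl, h⟩ => aux_bwd T hT hTs (Fge X lam) hl
    (fun x => ⟨aux_pt_fuzzy hl x, x, by simp [auxPt]⟩) h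
  tfae_finish
end
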